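/- Fix λ > 0. As δ → 0+, the Laplace transform Ĥ_δ(λ) := ∫_0^∞ e^{−λ(δ+t)} h_δ(t) dt satisfies Ĥ_δ(λ) = 1 − (2√2/√π) · (Γ((λ+1)/2)/Γ(λ/2)) · √δ + O(δ), where h_δ(t) := 4 e^t sinh(δ) sinh(t) / (π sinh(δ+t) √((1 − e^{−2δ})(1 − e^{−2t})) (e^{2t} − 1)). -/

import Mathlib

/-!
With `w t = √(e^{2t} - 1)` and `r = √(1 - e^{-2δ})` the density simplifies to
`h_δ(t) = (2/π) r e^{2t} / ((r² + w²) w)`, which is the derivative of `(2/π) arctan (w / r)`; hence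
`∫ h_δ = 1` (`integral_hDens`). Therefore `1 - e^{lδ} Ĥ_δ(l) = ∫ (1 - e^{-lt}) h_δ(t) dt`.

Letting `δ → 0` in `h_δ / r` gives the kernel `(2/π) e^{2t} / w³`, and the exact identity
`r (2/π) e^{2t}/w³ - h_δ = h_δ r²/w²` holds (`kernel_eq`). Since `(1 - e^{-lt}) / w² ≤ l / 2`, replacing
`h_δ` by `r` times the limiting kernel costs at most `(l/2) r² ∫ h_δ = O(δ)` (`scaled_bounds`).

The constant `∫ (1 - e^{-lt}) e^{2t}/w³ dt` is computed by parts, `-1/w` being an antiderivative of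
`e^{2t}/w³`; this leaves `∫ l e^{-lt}/w dt`, a Beta integral after the substitution `x = e^{-2t}`
(`integral_kernel`, `integral_exp_div_w`). Finally `r = √(2δ) + O(δ)`.
-/

open Real MeasureTheory Set Filter Asymptotics

/-- `h_δ(t)`: the density of the first zero-crossing time of an Ornstein–Uhlenbeck process
started from a centered Gaussian initial condition with variance `(1 − e^{−2δ})/2`. -/
noncomputable def hDens (δ t : ℝ) : ℝ :=
  4 * Real.exp t * Real.sinh δ * Real.sinh t /
    (π * Real.sinh (δ + t) *
      Real.sqrt ((1 - Real.exp (-2 * δ)) * (1 - Real.exp (-2 * t))) *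
      (Real.exp (2 * t) - 1))

/-- The Laplace transform `Ĥ_δ(λ) = E[e^{−λ τ_δ}] = ∫₀^∞ e^{−λ(δ+t)} h_δ(t) dt`. -/
noncomputable def laplaceH (δ l : ℝ) : ℝ :=
  ∫ t in Ioi (0 : ℝ), Real.exp (-l * (δ + t)) * hDens δ t

/-! ### The variable `w` and the closed form of the density -/

/-- The natural variable `w(t) = √(e^{2t} - 1)` in which `h_δ` becomes a Cauchy density. -/
noncomputable def wFun (t : ℝ) : ℝ := Real.sqrt (Real.exp (2 * t) - 1)

lemma exp_sub_one_pos {t : ℝ} (ht : 0 < t) : 0 < Real.exp (2 * t) - 1 := by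
  have := Real.add_one_le_exp (2 * t)
  linarith

lemma wFun_pos {t : ℝ} (ht : 0 < t) : 0 < wFun t := Real.sqrt_pos.2 (exp_sub_one_pos ht)

lemma wFun_sq {t : ℝ} (ht : 0 < t) : wFun t ^ 2 = Real.exp (2 * t) - 1 :=
  Real.sq_sqrt (exp_sub_one_pos ht).le

lemma wFun_zero : wFun 0 = 0 := by simp [wFun]

lemma continuous_wFun : Continuous wFun := by unfold wFun; fun_prop

lemma hasDerivAt_wFun {t : ℝ} (ht : 0 < t) :
    HasDerivAt wFun (Real.exp (2 * t) / wFun t) t := by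
  have h1 : HasDerivAt (fun t : ℝ => Real.exp (2 * t) - 1) (Real.exp (2 * t) * (2 * 1)) t :=
    (((hasDerivAt_id t).const_mul 2).exp).sub_const 1
  have h2 := h1.sqrt (exp_sub_one_pos ht).ne'
  refine h2.congr_deriv ?_
  have := (wFun_pos ht).ne'
  change _ / (2 * wFun t) = _
  field_simp

lemma tendsto_wFun : Tendsto wFun atTop atTop := by
  refine Real.tendsto_sqrt_atTop.comp ?_
  refine tendsto_atTop_add_const_right _ _ ?_
  exact Real.tendsto_exp_atTop.comp (tendsto_id.const_mul_atTop (by norm_num))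

lemma one_sub_exp_pos {δ : ℝ} (hδ : 0 < δ) : 0 < 1 - Real.exp (-2 * δ) := by
  have : Real.exp (-2 * δ) < 1 := Real.exp_lt_one_iff.2 (by linarith)
  linarith

lemma hDens_eq {δ t : ℝ} (hδ : 0 < δ) (ht : 0 < t) :
    hDens δ t = 2 / π * Real.sqrt (1 - Real.exp (-2 * δ)) * Real.exp (2 * t) /
      ((Real.sqrt (1 - Real.exp (-2 * δ)) ^ 2 + wFun t ^ 2) * wFun t) := by
  have ha := one_sub_exp_pos hδ
  have hw := wFun_pos ht
  have hw2 := wFun_sq ht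
  have hr : 0 < Real.sqrt (1 - Real.exp (-2 * δ)) := Real.sqrt_pos.2 ha
  have hr2 : Real.sqrt (1 - Real.exp (-2 * δ)) ^ 2 = 1 - Real.exp (-2 * δ) := Real.sq_sqrt ha.le
  have hE := Real.exp_pos t
  have hD := Real.exp_pos δ
  have e1 : Real.exp (2 * t) = Real.exp t ^ 2 := by rw [← Real.exp_nat_mul]; norm_num
  have e2 : Real.exp (-2 * t) = (Real.exp t ^ 2)⁻¹ := by
    rw [← e1, ← Real.exp_neg]; ring_nf
  have e3 : Real.exp (-2 * δ) = (Real.exp δ ^ 2)⁻¹ := by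
    rw [← Real.exp_nat_mul, ← Real.exp_neg]; norm_num
  have hs : Real.sqrt ((1 - Real.exp (-2 * δ)) * (1 - Real.exp (-2 * t))) =
      Real.sqrt (1 - Real.exp (-2 * δ)) * (wFun t / Real.exp t) := by
    rw [Real.sqrt_mul ha.le]
    congr 1
    rw [Real.sqrt_eq_iff_mul_self_eq_of_pos (by positivity), e2]
    have : wFun t / Real.exp t * (wFun t / Real.exp t) = wFun t ^ 2 / Real.exp t ^ 2 := by
      field_simp
    rw [this, hw2, e1]
    field_simp
  unfold hDens
  rw [hs]
  set r := Real.sqrt (1 - Real.exp (-2 * δ)) with hrdef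
  set w := wFun t with hwdef
  set E := Real.exp t with hEdef
  set D := Real.exp δ with hDdef
  rw [e3] at hr2
  rw [e1] at hw2 ⊢
  have s1 : Real.sinh t = w ^ 2 / (2 * E) := by
    rw [Real.sinh_eq, Real.exp_neg, ← hEdef, hw2]; field_simp
  have s2 : Real.sinh δ = D * r ^ 2 / 2 := by
    rw [Real.sinh_eq, Real.exp_neg, ← hDdef, hr2]; field_simp
  have s3 : Real.sinh (δ + t) = D * (r ^ 2 + w ^ 2) / (2 * E) := by
    rw [Real.sinh_eq, Real.exp_neg, Real.exp_add, ← hDdef, ← hEdef, hr2, hw2]; field_simp; ring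
  rw [s1, s2, s3, ← hw2]
  have := Real.pi_pos
  field_simp
  ring

lemma hDens_nonneg {δ t : ℝ} (hδ : 0 < δ) (ht : 0 < t) : 0 ≤ hDens δ t := by
  rw [hDens_eq hδ ht]
  have := wFun_pos ht
  have := Real.pi_pos
  positivity

/-! ### Total mass of the density -/

/-- The distribution function of `h_δ` on `t ≥ 0`, for `δ > 0`. -/
noncomputable def cdfH (δ t : ℝ) : ℝ :=
  2 / π * Real.arctan (wFun t / Real.sqrt (1 - Real.exp (-2 * δ)))

lemma continuous_cdfH (δ : ℝ) : Continuous (cdfH δ) := by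
  unfold cdfH
  have := continuous_wFun
  fun_prop

lemma hasDerivAt_cdfH {δ t : ℝ} (hδ : 0 < δ) (ht : 0 < t) :
    HasDerivAt (cdfH δ) (hDens δ t) t := by
  have h := (((hasDerivAt_wFun ht).div_const
    (Real.sqrt (1 - Real.exp (-2 * δ)))).arctan).const_mul (2 / π)
  refine h.congr_deriv ?_
  rw [hDens_eq hδ ht]
  have hr : 0 < Real.sqrt (1 - Real.exp (-2 * δ)) := Real.sqrt_pos.2 (one_sub_exp_pos hδ)
  have := wFun_pos ht
  have := Real.pi_pos
  generalize Real.sqrt (1 - Real.exp (-2 * δ)) = r at *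
  field_simp

lemma tendsto_cdfH {δ : ℝ} (hδ : 0 < δ) : Tendsto (cdfH δ) atTop (nhds 1) := by
  have hr : 0 < Real.sqrt (1 - Real.exp (-2 * δ)) := Real.sqrt_pos.2 (one_sub_exp_pos hδ)
  have h := ((Real.tendsto_arctan_atTop.mono_right nhdsWithin_le_nhds).comp
    (tendsto_wFun.atTop_div_const hr)).const_mul (2 / π)
  have e : 2 / π * (π / 2) = 1 := by have := Real.pi_pos; field_simp
  rw [e] at h
  exact h

lemma integrableOn_hDens {δ : ℝ} (hδ : 0 < δ) : IntegrableOn (hDens δ) (Ioi 0) :=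
  integrableOn_Ioi_deriv_of_nonneg (continuous_cdfH δ).continuousWithinAt
    (fun _ ht => hasDerivAt_cdfH hδ ht) (fun _ ht => hDens_nonneg hδ ht) (tendsto_cdfH hδ)

lemma integral_hDens {δ : ℝ} (hδ : 0 < δ) : ∫ t in Ioi 0, hDens δ t = 1 := by
  rw [integral_Ioi_of_hasDerivAt_of_nonneg (continuous_cdfH δ).continuousWithinAt
    (fun _ ht => hasDerivAt_cdfH hδ ht) (fun _ ht => hDens_nonneg hδ ht) (tendsto_cdfH hδ)]
  simp [cdfH, wFun_zero]

/-! ### Comparison with the limiting kernel -/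

lemma kernel_eq {δ t : ℝ} (hδ : 0 < δ) (ht : 0 < t) :
    Real.sqrt (1 - Real.exp (-2 * δ)) * (2 / π) * (Real.exp (2 * t) / wFun t ^ 3) =
      hDens δ t + hDens δ t * (Real.sqrt (1 - Real.exp (-2 * δ)) ^ 2 / wFun t ^ 2) := by
  rw [hDens_eq hδ ht]
  have hr : 0 < Real.sqrt (1 - Real.exp (-2 * δ)) := Real.sqrt_pos.2 (one_sub_exp_pos hδ)
  have := wFun_pos ht
  have := Real.pi_pos
  field_simp
  ring

lemma one_sub_exp_nonneg {l t : ℝ} (hl : 0 < l) (ht : 0 < t) : 0 ≤ 1 - Real.exp (-l * t) := by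
  have : Real.exp (-l * t) ≤ 1 := Real.exp_le_one_iff.2 (by nlinarith [mul_pos hl ht])
  linarith

lemma one_sub_exp_le (l t : ℝ) : 1 - Real.exp (-l * t) ≤ l * t := by
  have := Real.add_one_le_exp (-l * t)
  linarith

lemma two_mul_le_wFun_sq {t : ℝ} (ht : 0 < t) : 2 * t ≤ wFun t ^ 2 := by
  rw [wFun_sq ht]
  have := Real.add_one_le_exp (2 * t)
  linarith

lemma ratio_le {l t : ℝ} (hl : 0 < l) (ht : 0 < t) :
    (1 - Real.exp (-l * t)) / wFun t ^ 2 ≤ l / 2 := by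
  have h1 := one_sub_exp_le l t
  have h2 := two_mul_le_wFun_sq ht
  have h3 : 0 < wFun t ^ 2 := pow_pos (wFun_pos ht) 2
  rw [div_le_div_iff₀ h3 (by norm_num)]
  nlinarith

lemma ratio_nonneg {l t : ℝ} (hl : 0 < l) (ht : 0 < t) :
    0 ≤ (1 - Real.exp (-l * t)) / wFun t ^ 2 :=
  div_nonneg (one_sub_exp_nonneg hl ht) (sq_nonneg _)

lemma measurable_wFun : Measurable wFun := continuous_wFun.measurable

lemma integrableOn_error {δ l : ℝ} (hl : 0 < l) (hδ : 0 < δ) :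
    IntegrableOn (fun t => (1 - Real.exp (-l * t)) / wFun t ^ 2 * hDens δ t) (Ioi 0) := by
  refine Integrable.bdd_mul (c := l / 2) (integrableOn_hDens hδ) ?_ ?_
  · have := measurable_wFun
    exact Measurable.aestronglyMeasurable (by fun_prop)
  · filter_upwards [ae_restrict_mem measurableSet_Ioi] with t ht
    rw [Real.norm_of_nonneg (ratio_nonneg hl ht)]
    exact ratio_le hl ht

lemma integrableOn_exp_hDens {δ l : ℝ} (hl : 0 < l) (hδ : 0 < δ) :
    IntegrableOn (fun t => Real.exp (-l * t) * hDens δ t) (Ioi 0) := by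
  refine Integrable.bdd_mul (c := 1) (integrableOn_hDens hδ) ?_ ?_
  · exact Measurable.aestronglyMeasurable (by fun_prop)
  · filter_upwards [ae_restrict_mem measurableSet_Ioi] with t ht
    rw [Real.norm_of_nonneg (Real.exp_pos _).le]
    linarith [one_sub_exp_nonneg hl ht]

lemma kernel_decomp {δ l t : ℝ} (hδ : 0 < δ) (ht : 0 < t) :
    Real.sqrt (1 - Real.exp (-2 * δ)) * (2 / π) *
        ((1 - Real.exp (-l * t)) * (Real.exp (2 * t) / wFun t ^ 3)) =
      hDens δ t - Real.exp (-l * t) * hDens δ t +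
        Real.sqrt (1 - Real.exp (-2 * δ)) ^ 2 *
          ((1 - Real.exp (-l * t)) / wFun t ^ 2 * hDens δ t) := by
  linear_combination (1 - Real.exp (-l * t)) * kernel_eq hδ ht

/-- The integrand is a bounded multiple of `h_δ` for any fixed `δ`; here `δ = 1`. -/
lemma integrableOn_kernel {l : ℝ} (hl : 0 < l) :
    IntegrableOn (fun t => (1 - Real.exp (-l * t)) * (Real.exp (2 * t) / wFun t ^ 3)) (Ioi 0) := by
  have hδ : (0 : ℝ) < 1 := one_pos
  have h1 := ((integrableOn_hDens hδ).sub (integrableOn_exp_hDens hl hδ)).add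
    ((integrableOn_error hl hδ).const_mul (Real.sqrt (1 - Real.exp (-2 * 1)) ^ 2))
  have hr : 0 < Real.sqrt (1 - Real.exp (-2 * 1)) := Real.sqrt_pos.2 (one_sub_exp_pos hδ)
  have hc : Real.sqrt (1 - Real.exp (-2 * 1)) * (2 / π) ≠ 0 := by
    have := Real.pi_pos
    positivity
  have h2 : IntegrableOn (fun t => Real.sqrt (1 - Real.exp (-2 * 1)) * (2 / π) *
      ((1 - Real.exp (-l * t)) * (Real.exp (2 * t) / wFun t ^ 3))) (Ioi 0) :=
    IntegrableOn.congr_fun h1 (fun t ht => (kernel_decomp hδ ht).symm) measurableSet_Ioi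
  exact (integrable_const_mul_iff (IsUnit.mk0 _ hc) _).1 h2

/-- The two-sided bound on `e^{lδ} Ĥ_δ(l) - (1 - r (2/π) L)`, where `L` is the integral of the
limiting kernel against `1 - e^{-lt}`. -/
lemma scaled_bounds {δ l : ℝ} (hl : 0 < l) (hδ : 0 < δ) :
    ∃ err : ℝ, 0 ≤ err ∧ err ≤ (1 - Real.exp (-2 * δ)) * (l / 2) ∧
      ∫ t in Ioi 0, Real.exp (-l * t) * hDens δ t =
        1 - Real.sqrt (1 - Real.exp (-2 * δ)) * (2 / π) *
          (∫ t in Ioi 0, (1 - Real.exp (-l * t)) * (Real.exp (2 * t) / wFun t ^ 3)) + err := by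
  have ha := one_sub_exp_pos hδ
  have hr2 : Real.sqrt (1 - Real.exp (-2 * δ)) ^ 2 = 1 - Real.exp (-2 * δ) := Real.sq_sqrt ha.le
  refine ⟨(1 - Real.exp (-2 * δ)) *
    ∫ t in Ioi 0, (1 - Real.exp (-l * t)) / wFun t ^ 2 * hDens δ t, ?_, ?_, ?_⟩
  · refine mul_nonneg ha.le (setIntegral_nonneg measurableSet_Ioi fun t ht => ?_)
    exact mul_nonneg (ratio_nonneg hl ht) (hDens_nonneg hδ ht)
  · refine mul_le_mul_of_nonneg_left ?_ ha.le
    calc ∫ t in Ioi 0, (1 - Real.exp (-l * t)) / wFun t ^ 2 * hDens δ t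
        ≤ ∫ t in Ioi 0, l / 2 * hDens δ t := by
          refine setIntegral_mono_on (integrableOn_error hl hδ)
            ((integrableOn_hDens hδ).const_mul _) measurableSet_Ioi fun t ht => ?_
          exact mul_le_mul_of_nonneg_right (ratio_le hl ht) (hDens_nonneg hδ ht)
      _ = l / 2 := by rw [integral_const_mul, integral_hDens hδ, mul_one]
  · have h := setIntegral_congr_fun (μ := volume) measurableSet_Ioi
      (fun t (ht : t ∈ Ioi (0 : ℝ)) => kernel_decomp (l := l) hδ ht)
    have hsub : IntegrableOn (fun t => hDens δ t - Real.exp (-l * t) * hDens δ t) (Ioi 0) :=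
      (integrableOn_hDens hδ).sub (integrableOn_exp_hDens hl hδ)
    rw [integral_const_mul, integral_add hsub ((integrableOn_error hl hδ).const_mul _),
      integral_sub (integrableOn_hDens hδ) (integrableOn_exp_hDens hl hδ),
      integral_const_mul, integral_hDens hδ, hr2] at h
    linarith

/-! ### The constant as a Beta integral -/

lemma integral_beta_half {u : ℝ} (hu : 0 < u) :
    ∫ x in Ioo (0 : ℝ) 1, x ^ (u - 1) * (1 - x) ^ (-(1 / 2) : ℝ) =
      Real.Gamma u * Real.sqrt π / Real.Gamma (u + 1 / 2) := by
  have h := ProbabilityTheory.beta_eq_betaIntegralReal u (1 / 2) hu (by norm_num)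
  rw [ProbabilityTheory.beta, Real.Gamma_one_half_eq] at h
  rw [h, Complex.betaIntegral, intervalIntegral.integral_of_le zero_le_one,
    integral_Ioc_eq_integral_Ioo]
  have : ∫ x in Ioo (0 : ℝ) 1, (x : ℂ) ^ ((u : ℂ) - 1) *
      (1 - (x : ℂ)) ^ (((1 / 2 : ℝ) : ℂ) - 1) =
      ∫ x in Ioo (0 : ℝ) 1, ((x ^ (u - 1) * (1 - x) ^ (-(1 / 2) : ℝ) : ℝ) : ℂ) := by
    refine setIntegral_congr_fun measurableSet_Ioo fun x hx => ?_
    rw [Complex.ofReal_mul, Complex.ofReal_cpow hx.1.le,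
      Complex.ofReal_cpow (by linarith [hx.2])]
    push_cast
    norm_num
  rw [this, integral_complex_ofReal, Complex.ofReal_re]

lemma integral_exp_div_w {l : ℝ} (hl : 0 < l) :
    ∫ t in Ioi 0, l * Real.exp (-l * t) / wFun t =
      Real.sqrt π * (Real.Gamma ((l + 1) / 2) / Real.Gamma (l / 2)) := by
  have himg : (fun t : ℝ => Real.exp (-2 * t)) '' Ioi 0 = Ioo 0 1 := by
    ext x
    constructor
    · rintro ⟨t, ht, rfl⟩
      exact ⟨Real.exp_pos _, by linarith [one_sub_exp_pos (mem_Ioi.1 ht)]⟩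
    · rintro ⟨h0, h1⟩
      refine ⟨-Real.log x / 2, ?_, ?_⟩
      · have := Real.log_neg h0 h1
        simp only [mem_Ioi]; linarith
      · simp only
        rw [show -2 * (-Real.log x / 2) = Real.log x by ring, Real.exp_log h0]
  have hcv := integral_image_eq_integral_abs_deriv_smul (s := Ioi (0 : ℝ))
    (f := fun t : ℝ => Real.exp (-2 * t)) (f' := fun t => Real.exp (-2 * t) * (-2 * 1))
    measurableSet_Ioi
    (fun t _ => (((hasDerivAt_id t).const_mul (-2)).exp).hasDerivWithinAt)
    (fun a _ b _ hab => by
      have := Real.exp_injective hab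
      linarith)
    (fun x => x ^ ((l + 1) / 2 - 1) * (1 - x) ^ (-(1 / 2) : ℝ))
  rw [himg, integral_beta_half (by linarith)] at hcv
  have hpt : ∀ t ∈ Ioi (0 : ℝ), l * Real.exp (-l * t) / wFun t =
      l / 2 * (|Real.exp (-2 * t) * (-2 * 1)| •
        ((Real.exp (-2 * t)) ^ ((l + 1) / 2 - 1) *
          (1 - Real.exp (-2 * t)) ^ (-(1 / 2) : ℝ))) := by
    intro t ht
    have ht : 0 < t := ht
    have hw := wFun_pos ht
    have ha := one_sub_exp_pos ht
    have hs : Real.sqrt (1 - Real.exp (-2 * t)) = wFun t * Real.exp (-t) := by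
      rw [Real.sqrt_eq_iff_mul_self_eq_of_pos (by positivity)]
      have : wFun t * Real.exp (-t) * (wFun t * Real.exp (-t)) =
          wFun t ^ 2 * (Real.exp (-t) * Real.exp (-t)) := by ring
      rw [this, wFun_sq ht, ← Real.exp_add, sub_mul, ← Real.exp_add]
      ring_nf
      simp
    rw [Real.rpow_neg ha.le, ← Real.sqrt_eq_rpow, hs, ← Real.exp_mul, abs_mul,
      abs_of_pos (Real.exp_pos _), smul_eq_mul]
    norm_num
    have e : Real.exp (-(l * t)) = Real.exp (-(2 * t)) *
        Real.exp (-(2 * t * ((l + 1) / 2 - 1))) * Real.exp t := by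
      rw [← Real.exp_add, ← Real.exp_add]
      ring_nf
    rw [e, Real.exp_neg t]
    field_simp
  rw [setIntegral_congr_fun measurableSet_Ioi hpt, integral_const_mul, ← hcv]
  have hg : Real.Gamma ((l + 1) / 2 + 1 / 2) = l / 2 * Real.Gamma (l / 2) := by
    rw [← Real.Gamma_add_one (by positivity)]
    ring_nf
  have := Real.Gamma_pos_of_pos (half_pos hl)
  rw [hg]
  field_simp

/-- The boundary term `(1 - e^{-lt}) / w` of the integration by parts; its value at `0` is the
correct limit `0` because `x / 0 = 0`. -/
noncomputable def bdry (l t : ℝ) : ℝ := (1 - Real.exp (-l * t)) / wFun t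

lemma continuousWithinAt_bdry {l : ℝ} (hl : 0 < l) :
    ContinuousWithinAt (bdry l) (Ici 0) 0 := by
  have h0 : bdry l 0 = 0 := by simp [bdry]
  have hlim : Tendsto (fun t => l / 2 * wFun t) (nhdsWithin 0 (Ici 0)) (nhds 0) := by
    have := (continuous_wFun.const_mul (l / 2)).continuousWithinAt (s := Ici 0) (x := 0)
    simpa [ContinuousWithinAt, wFun_zero] using this
  unfold ContinuousWithinAt
  rw [h0]
  refine squeeze_zero' ?_ ?_ hlim
  · filter_upwards [self_mem_nhdsWithin] with t ht
    rcases (mem_Ici.1 ht).eq_or_lt with rfl | ht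
    · rw [h0]
    · exact div_nonneg (one_sub_exp_nonneg hl ht) (wFun_pos ht).le
  · filter_upwards [self_mem_nhdsWithin] with t ht
    rcases (mem_Ici.1 ht).eq_or_lt with rfl | ht
    · rw [h0, wFun_zero, mul_zero]
    · have hw := wFun_pos ht
      have : bdry l t = (1 - Real.exp (-l * t)) / wFun t ^ 2 * wFun t := by
        unfold bdry; field_simp
      rw [this]
      exact mul_le_mul_of_nonneg_right (ratio_le hl ht) hw.le

lemma tendsto_bdry {l : ℝ} (hl : 0 < l) : Tendsto (bdry l) atTop (nhds 0) := by
  refine squeeze_zero' (g := fun t => (wFun t)⁻¹) ?_ ?_ tendsto_wFun.inv_tendsto_atTop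
  · filter_upwards [eventually_gt_atTop 0] with t ht
    exact div_nonneg (one_sub_exp_nonneg hl ht) (wFun_pos ht).le
  · filter_upwards [eventually_gt_atTop 0] with t ht
    rw [bdry, inv_eq_one_div]
    have := Real.exp_pos (-l * t)
    exact div_le_div_of_nonneg_right (by linarith) (wFun_pos ht).le

lemma hasDerivAt_bdry {l t : ℝ} (ht : 0 < t) :
    HasDerivAt (bdry l) (l * Real.exp (-l * t) / wFun t -
      (1 - Real.exp (-l * t)) * (Real.exp (2 * t) / wFun t ^ 3)) t := by
  have h1 : HasDerivAt (fun t : ℝ => 1 - Real.exp (-l * t)) (-(Real.exp (-l * t) * (-l * 1))) t :=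
    (((hasDerivAt_id t).const_mul (-l)).exp).const_sub 1
  have hw := wFun_pos ht
  refine (h1.div (hasDerivAt_wFun ht) hw.ne').congr_deriv ?_
  field_simp

lemma integral_kernel {l : ℝ} (hl : 0 < l) :
    ∫ t in Ioi 0, (1 - Real.exp (-l * t)) * (Real.exp (2 * t) / wFun t ^ 3) =
      Real.sqrt π * (Real.Gamma ((l + 1) / 2) / Real.Gamma (l / 2)) := by
  have hint : IntegrableOn (fun t => l * Real.exp (-l * t) / wFun t) (Ioi 0) := by
    -- A non-integrable function would have Bochner integral `0`, but the value is positive.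
    by_contra h
    have h0 := integral_exp_div_w hl
    rw [integral_undef h] at h0
    have := Real.Gamma_pos_of_pos (half_pos hl)
    have := Real.Gamma_pos_of_pos (show 0 < (l + 1) / 2 by linarith)
    have := Real.pi_pos
    have : 0 < Real.sqrt π * (Real.Gamma ((l + 1) / 2) / Real.Gamma (l / 2)) := by positivity
    linarith
  have h := integral_Ioi_of_hasDerivAt_of_tendsto (continuousWithinAt_bdry hl)
    (fun t ht => hasDerivAt_bdry ht) (hint.sub (integrableOn_kernel hl)) (tendsto_bdry hl)
  have e := integral_sub hint (integrableOn_kernel hl)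
  have h0 : bdry l 0 = 0 := by simp [bdry]
  rw [h0] at h
  rw [← integral_exp_div_w hl]
  linarith [e.symm.trans h]

/-! ### The expansion -/

lemma one_sub_exp_lower {δ : ℝ} (hδ : 0 < δ) : 2 * δ - 2 * δ ^ 2 ≤ 1 - Real.exp (-2 * δ) := by
  have h := Real.quadratic_le_exp_of_nonneg (x := 2 * δ) (by linarith)
  have hm : Real.exp (-2 * δ) * Real.exp (2 * δ) = 1 := by
    rw [← Real.exp_add]; simp
  have hp := Real.exp_pos (-2 * δ)
  by_contra! hc
  have h1 : Real.exp (-2 * δ) * (1 + 2 * δ + (2 * δ) ^ 2 / 2) ≤ 1 := by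
    exact (mul_le_mul_of_nonneg_left h hp.le).trans_eq hm
  have h2 : 0 < 1 + 2 * δ + (2 * δ) ^ 2 / 2 := by positivity
  nlinarith [mul_lt_mul_of_pos_right (show 1 - 2 * δ + 2 * δ ^ 2 < Real.exp (-2 * δ) by linarith) h2,
    pow_pos hδ 4]

/-- With `s = √(2δ) ≤ 1`, the bound is `(s - s²)² ≤ s² - s³ ≤ s² - s⁴/2 ≤ 1 - e^{-2δ}`. -/
lemma sqrt_lower {δ : ℝ} (hδ : 0 < δ) (h1 : δ ≤ 1 / 2) :
    Real.sqrt (2 * δ) - 2 * δ ≤ Real.sqrt (1 - Real.exp (-2 * δ)) := by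
  apply Real.le_sqrt_of_sq_le
  refine le_trans ?_ (one_sub_exp_lower hδ)
  have hs2 : Real.sqrt (2 * δ) ^ 2 = 2 * δ := Real.sq_sqrt (by linarith)
  have hs0 : 0 ≤ Real.sqrt (2 * δ) := Real.sqrt_nonneg _
  have hs1 : Real.sqrt (2 * δ) ≤ 1 := Real.sqrt_le_one.2 (by linarith)
  set s := Real.sqrt (2 * δ)
  have hd : δ = s ^ 2 / 2 := by linarith
  rw [hd]
  nlinarith [mul_nonneg (pow_nonneg hs0 3) (sub_nonneg.2 hs1), pow_nonneg hs0 3]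

/-- Small-`δ` expansion of the Laplace transform:
`Ĥ_δ(λ) = 1 − (2√2/√π)·(Γ((λ+1)/2)/Γ(λ/2))·√δ + O(δ)` as `δ → 0+`. -/
theorem laplaceH_expansion (l : ℝ) (hl : 0 < l) :
    (fun δ : ℝ =>
        laplaceH δ l -
          (1 - 2 * Real.sqrt 2 / Real.sqrt π *
            (Real.Gamma ((l + 1) / 2) / Real.Gamma (l / 2)) * Real.sqrt δ)) =O[nhdsWithin 0 (Ioi 0)]
      (fun δ : ℝ => δ) := by
  have hG : 0 < Real.Gamma ((l + 1) / 2) / Real.Gamma (l / 2) :=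
    div_pos (Real.Gamma_pos_of_pos (by linarith)) (Real.Gamma_pos_of_pos (half_pos hl))
  set G := Real.Gamma ((l + 1) / 2) / Real.Gamma (l / 2) with hGdef
  have hπ : 0 < Real.sqrt π := Real.sqrt_pos.2 Real.pi_pos
  -- `M` is the coefficient of `√(2δ)`.
  set M := 2 / Real.sqrt π * G with hM
  have hM0 : 0 < M := by positivity
  refine IsBigO.of_bound (l + l + 2 * M) ?_
  filter_upwards [Ioc_mem_nhdsGT (show (0 : ℝ) < 1 / 2 by norm_num)] with δ hδ
  obtain ⟨hδ0, hδ1⟩ := hδ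
  obtain ⟨err, he0, he1, hX⟩ := scaled_bounds hl hδ0
  rw [integral_kernel hl, ← hGdef] at hX
  have hc : 2 / π * (Real.sqrt π * G) = M := by
    rw [hM]
    have := Real.sq_sqrt Real.pi_pos.le
    have hp := Real.pi_pos
    field_simp
    linear_combination this
  rw [mul_assoc, hc] at hX
  have hH : laplaceH δ l =
      Real.exp (-l * δ) * ∫ t in Ioi 0, Real.exp (-l * t) * hDens δ t := by
    rw [laplaceH, ← integral_const_mul]
    congr 1
    ext t
    rw [mul_add, Real.exp_add, mul_assoc]
  have hX0 : 0 ≤ ∫ t in Ioi 0, Real.exp (-l * t) * hDens δ t :=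
    setIntegral_nonneg measurableSet_Ioi fun t ht =>
      mul_nonneg (Real.exp_pos _).le (hDens_nonneg hδ0 ht)
  have hX1 : ∫ t in Ioi 0, Real.exp (-l * t) * hDens δ t ≤ 1 := by
    rw [← integral_hDens hδ0]
    refine setIntegral_mono_on (integrableOn_exp_hDens hl hδ0) (integrableOn_hDens hδ0)
      measurableSet_Ioi fun t ht => ?_
    exact mul_le_of_le_one_left (hDens_nonneg hδ0 ht) (by linarith [one_sub_exp_nonneg hl ht])
  set X := ∫ t in Ioi 0, Real.exp (-l * t) * hDens δ t
  set r := Real.sqrt (1 - Real.exp (-2 * δ)) with hr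
  have ha : 1 - Real.exp (-2 * δ) ≤ 2 * δ := one_sub_exp_le 2 δ
  have hrl : Real.sqrt (2 * δ) - 2 * δ ≤ r := sqrt_lower hδ0 hδ1
  have hru : r ≤ Real.sqrt (2 * δ) := Real.sqrt_le_sqrt ha
  have hmain : 2 * Real.sqrt 2 / Real.sqrt π * G * Real.sqrt δ = M * Real.sqrt (2 * δ) := by
    rw [Real.sqrt_mul (by norm_num), hM]; ring
  have hq0 := one_sub_exp_nonneg hl hδ0
  have hq1 := one_sub_exp_le l δ
  have hHX0 : 0 ≤ X - Real.exp (-l * δ) * X := by nlinarith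
  have hHX1 : X - Real.exp (-l * δ) * X ≤ l * δ := by nlinarith
  have hr1 : M * (Real.sqrt (2 * δ) - r) ≤ M * (2 * δ) :=
    mul_le_mul_of_nonneg_left (by linarith) hM0.le
  have hr0 : 0 ≤ M * (Real.sqrt (2 * δ) - r) := mul_nonneg hM0.le (by linarith)
  have he2 : err ≤ δ * l := by nlinarith
  rw [hH, hmain, Real.norm_eq_abs, Real.norm_of_nonneg hδ0.le, abs_le]
  have hMδ := mul_pos hM0 hδ0
  have hlδ := mul_pos hl hδ0
  constructor <;> nlinarith
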